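/- Every connected weighted graph G on n vertices and every set 𝒫 ⊆ V × V of vertex pairs admits a subgraph H of G with at most C·n·|𝒫|^{1/3} edges (for a universal constant C) such that d_H(s,t) ≤ d_G(s,t) + 2·W(s,t) for every pair (s,t) ∈ 𝒫. -/

import Mathlib

open scoped ENNReal Classical

/-- The total weight of a walk: the sum of the weights of its edges. -/
noncomputable def walkWeight {V : Type} (G : SimpleGraph V) (w : Sym2 V → ℝ≥0∞)
    {s t : V} (p : G.Walk s t) : ℝ≥0∞ :=
  (p.edges.map w).sum

/-- Shortest-path distance in the weighted graph `(G, w)`, equal to `⊤` if there is no path. -/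
noncomputable def gdist {V : Type} (G : SimpleGraph V) (w : Sym2 V → ℝ≥0∞)
    (s t : V) : ℝ≥0∞ :=
  ⨅ p : G.Walk s t, walkWeight G w p

/-- The maximum edge weight along a walk (0 for the trivial walk). -/
noncomputable def maxEdge {V : Type} (G : SimpleGraph V) (w : Sym2 V → ℝ≥0∞)
    {s t : V} (p : G.Walk s t) : ℝ≥0∞ :=
  (p.edges.map w).foldr max 0

/-- `π` assigns to each ordered vertex pair a shortest path: a walk whose total
weight equals the shortest-path distance. -/
def IsShortestPathScheme {V : Type} (G : SimpleGraph V) (w : Sym2 V → ℝ≥0∞)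
    (π : (s t : V) → G.Walk s t) : Prop :=
  ∀ s t : V, walkWeight G w (π s t) = gdist G w s t

/-- The edge weights are positive and finite on all edges of `G`. -/
def PosWeights {V : Type} (G : SimpleGraph V) (w : Sym2 V → ℝ≥0∞) : Prop :=
  ∀ e ∈ G.edgeSet, 0 < w e ∧ w e ≠ ⊤

lemma foldr_max_ge (l : List ℝ≥0∞) (a : ℝ≥0∞) (h : a ∈ l) : a ≤ l.foldr max 0 := by
  induction l with
  | nil => simp at h
  | cons b l ih =>
    simp only [List.foldr_cons]
    rcases List.mem_cons.1 h with rfl | h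
    · exact le_max_left _ _
    · exact (ih h).trans (le_max_right _ _)

lemma le_maxEdge {V : Type} (G : SimpleGraph V) (w : Sym2 V → ℝ≥0∞) {s t : V}
    (p : G.Walk s t) (e : Sym2 V) (he : e ∈ p.edges) : w e ≤ maxEdge G w p :=
  foldr_max_ge _ _ (List.mem_map_of_mem he)

lemma gdist_le {V : Type} (G : SimpleGraph V) (w : Sym2 V → ℝ≥0∞) {s t : V}
    (p : G.Walk s t) : gdist G w s t ≤ walkWeight G w p := iInf_le _ p

lemma walkWeight_append {V : Type} (G : SimpleGraph V) (w : Sym2 V → ℝ≥0∞) {s t r : V}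
    (p : G.Walk s t) (q : G.Walk t r) :
    walkWeight G w (p.append q) = walkWeight G w p + walkWeight G w q := by
  simp [walkWeight]

lemma walkWeight_cons {V : Type} (G : SimpleGraph V) (w : Sym2 V → ℝ≥0∞) {s t r : V}
    (h : G.Adj s t) (q : G.Walk t r) :
    walkWeight G w (.cons h q) = w s(s, t) + walkWeight G w q := by
  simp [walkWeight]

lemma gdist_triangle {V : Type} (G : SimpleGraph V) (w : Sym2 V → ℝ≥0∞) (s t r : V) :
    gdist G w s r ≤ gdist G w s t + gdist G w t r := by
  have : gdist G w s t + gdist G w t r =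
      ⨅ p : G.Walk s t, ⨅ q : G.Walk t r, (walkWeight G w p + walkWeight G w q) := by
    simp only [gdist, ENNReal.iInf_add, ENNReal.add_iInf]
    exact iInf_comm
  rw [this]
  refine le_iInf fun p => le_iInf fun q => ?_
  rw [← walkWeight_append]
  exact gdist_le _ _ _

lemma gdist_symm_le {V : Type} (G : SimpleGraph V) (w : Sym2 V → ℝ≥0∞) (s t : V) :
    gdist G w s t ≤ gdist G w t s := by
  refine le_iInf fun p => (gdist_le G w p.reverse).trans (le_of_eq ?_)
  simp [walkWeight]

lemma gdist_symm {V : Type} (G : SimpleGraph V) (w : Sym2 V → ℝ≥0∞) (s t : V) :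
    gdist G w s t = gdist G w t s :=
  le_antisymm (gdist_symm_le _ _ _ _) (gdist_symm_le _ _ _ _)

lemma gdist_adj {V : Type} (G : SimpleGraph V) (w : Sym2 V → ℝ≥0∞) {s t : V}
    (h : G.Adj s t) : gdist G w s t ≤ w s(s, t) := by
  refine (gdist_le G w (.cons h .nil)).trans (le_of_eq ?_)
  simp [walkWeight]

lemma gdist_self {V : Type} (G : SimpleGraph V) (w : Sym2 V → ℝ≥0∞) (s : V) :
    gdist G w s s = 0 :=
  le_antisymm ((gdist_le G w .nil).trans (le_of_eq (by simp [walkWeight]))) (zero_le)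

lemma gdist_ne_top {V : Type} (G : SimpleGraph V) (w : Sym2 V → ℝ≥0∞)
    (hc : G.Connected) (hw : PosWeights G w) (s t : V) : gdist G w s t ≠ ⊤ := by
  obtain ⟨p⟩ := hc.preconnected s t
  refine ne_top_of_le_ne_top ?_ (gdist_le G w p)
  induction p with
  | nil => simp [walkWeight]
  | cons h p ih =>
    rw [walkWeight_cons]
    exact ENNReal.add_ne_top.2 ⟨(hw _ h).2, ih⟩

lemma gdist_mono {V : Type} {G H : SimpleGraph V} (w : Sym2 V → ℝ≥0∞) (h : G ≤ H) (s t : V) :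
    gdist H w s t ≤ gdist G w s t := by
  refine le_iInf fun p => (gdist_le H w (p.mapLe h)).trans (le_of_eq ?_)
  simp [walkWeight]

/-- Lightest-subset selection. -/
lemma exists_light {V : Type} (S : Finset V) (f : V → ℝ≥0∞) (D : ℕ) :
    ∃ T ⊆ S, T.card ≤ D ∧ ∀ y ∈ S, y ∉ T → T.card = D ∧ ∀ u ∈ T, f u ≤ f y := by
  induction D with
  | zero => exact ⟨∅, by simp, by simp, by simp⟩
  | succ D ih =>
    obtain ⟨T, hTS, hc, hT⟩ := ih
    by_cases hne : (S \ T).Nonempty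
    · obtain ⟨m, hm, hmin⟩ := Finset.exists_min_image (S \ T) f hne
      rw [Finset.mem_sdiff] at hm
      refine ⟨insert m T, Finset.insert_subset hm.1 hTS, ?_, ?_⟩
      · rw [Finset.card_insert_of_notMem hm.2]; omega
      · intro y hy hyT
        simp only [Finset.mem_insert, not_or] at hyT
        obtain ⟨h1, h2⟩ := hT y hy hyT.2
        refine ⟨by rw [Finset.card_insert_of_notMem hm.2]; omega, ?_⟩
        intro u hu
        rcases Finset.mem_insert.1 hu with rfl | hu
        · exact hmin y (by simp [hy, hyT.2])
        · exact h2 u hu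
    · refine ⟨T, hTS, by omega, ?_⟩
      intro y hy hyT
      exact absurd ⟨y, by simp [hy, hyT]⟩ hne

/-- The shortest path tree. -/
lemma exists_tree {V : Type} [Fintype V] (G : SimpleGraph V) (w : Sym2 V → ℝ≥0∞)
    (hc : G.Connected) (hw : PosWeights G w)
    (π : (s t : V) → G.Walk s t) (hπ : IsShortestPathScheme G w π) (r : V) :
    ∃ E : Finset (Sym2 V), (E : Set (Sym2 V)) ⊆ G.edgeSet ∧ E.card ≤ Fintype.card V ∧
      ∀ v, gdist (SimpleGraph.fromEdgeSet (E : Set (Sym2 V))) w v r ≤ gdist G w v r := by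
  have hpar : ∀ v, v ≠ r → ∃ u, G.Adj v u ∧ w s(v, u) + gdist G w u r ≤ gdist G w v r := by
    intro v hv
    have := hπ v r
    generalize π v r = p at this
    cases p with
    | nil => exact absurd rfl hv
    | cons h p =>
      refine ⟨_, h, ?_⟩
      rw [← this, walkWeight_cons]
      gcongr
      exact gdist_le _ _ _
  choose! par hadj hpar using hpar
  refine ⟨(Finset.univ.filter (· ≠ r)).image (fun v => s(v, par v)), ?_, ?_, ?_⟩
  · intro e he
    simp only [Finset.coe_image, Set.mem_image, Finset.mem_coe, Finset.mem_filter] at he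
    obtain ⟨v, ⟨-, hv⟩, rfl⟩ := he
    exact hadj v hv
  · exact Finset.card_image_le.trans (Finset.card_le_univ _)
  · intro v
    have wf : WellFounded (fun a b : V => gdist G w a r < gdist G w b r) :=
      @Finite.wellFounded_of_trans_of_irrefl V _ _ ⟨fun _ _ _ h1 h2 => lt_trans h1 h2⟩
        ⟨fun _ => lt_irrefl _⟩
    induction v using wf.induction with
    | _ v ih =>
      by_cases hv : v = r
      · subst hv; rw [gdist_self]; exact zero_le
      · have hlt : gdist G w (par v) r < gdist G w v r := by
          refine lt_of_lt_of_le ?_ (hpar v hv)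
          rw [add_comm]
          exact ENNReal.lt_add_right (gdist_ne_top G w hc hw _ _) (hw _ (hadj v hv)).1.ne'
        refine (gdist_triangle _ w v (par v) r).trans (le_trans ?_ (hpar v hv))
        refine add_le_add (gdist_adj _ _ ?_) (ih _ hlt)
        rw [SimpleGraph.fromEdgeSet_adj]
        refine ⟨?_, (hadj v hv).ne⟩
        simp only [Finset.coe_image, Set.mem_image, Finset.mem_coe, Finset.mem_filter]
        exact ⟨v, ⟨Finset.mem_univ _, hv⟩, rfl⟩

/-- Structure of darts along a shortest path. -/
lemma dart_struct {V : Type} (G : SimpleGraph V) (w : Sym2 V → ℝ≥0∞)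
    (hc : G.Connected) (hw : PosWeights G w) (s : V) {u t : V} (p : G.Walk u t)
    (hp : walkWeight G w p + gdist G w s u = gdist G w s t) :
    (∀ d ∈ p.darts, gdist G w s d.snd = gdist G w s d.fst + w d.edge ∧
      gdist G w s u ≤ gdist G w s d.fst ∧
      gdist G w s d.fst + gdist G w d.fst t ≤ gdist G w s t ∧
      gdist G w s d.snd + gdist G w d.snd t ≤ gdist G w s t) ∧
    p.darts.Pairwise (fun a b => gdist G w s a.snd ≤ gdist G w s b.fst) := by
  induction p with
  | nil => simp
  | @cons u v t h p ih =>
    rw [walkWeight_cons] at hp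
    have hfin : walkWeight G w p ≠ ⊤ := by
      intro h
      rw [h] at hp
      exact gdist_ne_top G w hc hw s t (by rw [← hp]; simp)
    have h1 : gdist G w s v = gdist G w s u + w s(u, v) := by
      apply le_antisymm
      · exact (gdist_triangle G w s u v).trans (by gcongr; exact gdist_adj G w h)
      · have h2 := (gdist_triangle G w s v t).trans
          (add_le_add le_rfl (gdist_le G w p))
        rw [← hp] at h2
        refine (ENNReal.add_le_add_iff_right hfin).1 (le_trans (le_of_eq ?_) h2)
        ring
    have h3 : walkWeight G w p + gdist G w s v = gdist G w s t := by
      rw [h1, ← hp]; ring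
    obtain ⟨ih1, ih2⟩ := ih h3
    have hle : gdist G w s u ≤ gdist G w s v := by rw [h1]; exact le_self_add
    simp only [SimpleGraph.Walk.darts_cons, List.mem_cons, List.pairwise_cons]
    refine ⟨?_, ?_, ih2⟩
    · rintro d (rfl | hd)
      · refine ⟨h1, le_rfl, ?_, ?_⟩
        · rw [← hp, add_comm]
          gcongr
          rw [← walkWeight_cons G w h]
          exact gdist_le _ _ _
        · rw [← h3, add_comm]
          gcongr
          exact gdist_le _ _ _
      · obtain ⟨a, b, c, d⟩ := ih1 d hd
        exact ⟨a, hle.trans b, c, d⟩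
    · intro d hd
      exact (ih1 d hd).2.1

/-- Disjoint-blocks counting lemma. -/
lemma blocks {V α : Type} (N : V → Finset V) (φ : V → ℝ) (D : ℕ) (Q : V → Prop)
    (f g : α → V) (ω : α → ℝ) : ∀ (n : ℕ) (l : List α), l.length ≤ n →
    (∀ d ∈ l, 0 < ω d ∧ φ (g d) = φ (f d) + ω d ∧ (N (f d)).card = D ∧ (N (g d)).card = D ∧
      (∀ u ∈ N (f d), Q u ∧ φ u ≤ φ (f d) + ω d ∧ φ (f d) ≤ φ u + ω d) ∧
      (∀ u ∈ N (g d), Q u ∧ φ u ≤ φ (g d) + ω d ∧ φ (g d) ≤ φ u + ω d)) →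
    l.Pairwise (fun a b => φ (g a) ≤ φ (f b)) → ∀ c : ℝ, (∀ d ∈ l, c ≤ φ (f d)) →
    ∃ S : Finset V, D * l.length ≤ 3 * S.card ∧ ∀ u ∈ S, Q u ∧ c ≤ φ u := by
  intro n
  induction n with
  | zero =>
    intro l hl _ _ c _
    refine ⟨∅, ?_, by simp⟩
    have : l.length = 0 := by omega
    simp [this]
  | succ n ih =>
    intro l hl hd hp c hcl
    rcases l with _ | ⟨d1, _ | ⟨d2, _ | ⟨d3, l⟩⟩⟩
    · exact ⟨∅, by simp, by simp⟩
    · obtain ⟨h1, h2, h3, h4, h5, h6⟩ := hd d1 (by simp)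
      have hc1 := hcl d1 (by simp)
      refine ⟨N (g d1), by simp; omega, fun u hu => ⟨(h6 u hu).1, ?_⟩⟩
      linarith [(h6 u hu).2.2]
    · obtain ⟨h1, h2, h3, h4, h5, h6⟩ := hd d1 (by simp)
      have hc1 := hcl d1 (by simp)
      refine ⟨N (g d1), by simp; omega, fun u hu => ⟨(h6 u hu).1, ?_⟩⟩
      linarith [(h6 u hu).2.2]
    · obtain ⟨h1, h2, h3, h4, h5, h6⟩ := hd d1 (by simp)
      obtain ⟨k1, k2, k3, k4, k5, k6⟩ := hd d2 (by simp)
      obtain ⟨m1, m2, -⟩ := hd d3 (by simp)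
      have hc1 := hcl d1 (by simp)
      simp only [List.pairwise_cons, List.mem_cons] at hp
      have p12 := hp.1 d2 (by simp)
      have p23 := hp.2.1 d3 (by simp)
      obtain ⟨S, hS, hSu⟩ := ih l (by simp at hl; omega)
        (fun d h => hd d (by simp [h])) hp.2.2.2 (φ (g d3)) (fun d h => hp.2.2.1 d h)
      have hB : ∃ B : Finset V, B.card = D ∧ ∀ u ∈ B, Q u ∧ c ≤ φ u ∧ φ u ≤ φ (g d2) := by
        rcases le_total (ω d1) (ω d2) with hle | hle
        · refine ⟨N (g d1), h4, fun u hu => ?_⟩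
          obtain ⟨a, b, e⟩ := h6 u hu
          exact ⟨a, by linarith, by linarith⟩
        · refine ⟨N (f d2), k3, fun u hu => ?_⟩
          obtain ⟨a, b, e⟩ := k5 u hu
          exact ⟨a, by linarith, by linarith⟩
      obtain ⟨B, hBc, hB⟩ := hB
      refine ⟨B ∪ S, ?_, ?_⟩
      · rw [Finset.card_union_of_disjoint, hBc]
        · simp only [List.length_cons]; nlinarith
        · rw [Finset.disjoint_left]
          intro u hu hu'
          have := (hB u hu).2.2
          have := (hSu u hu').2
          linarith
      · intro u hu
        rcases Finset.mem_union.1 hu with hu | hu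
        · exact ⟨(hB u hu).1, (hB u hu).2.1⟩
        · refine ⟨(hSu u hu).1, ?_⟩
          have := (hSu u hu).2
          linarith

lemma toReal_le_add {a b c : ℝ≥0∞} (h : a ≤ b + c) (hb : b ≠ ⊤) (hc : c ≠ ⊤) :
    a.toReal ≤ b.toReal + c.toReal := by
  rw [← ENNReal.toReal_add hb hc]
  exact ENNReal.toReal_mono (ENNReal.add_ne_top.2 ⟨hb, hc⟩) h

/-- Many missing edges imply many useful hubs. -/
lemma many_hubs {V : Type} [Fintype V] (G : SimpleGraph V) (w : Sym2 V → ℝ≥0∞)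
    (hc : G.Connected) (hw : PosWeights G w)
    (π : (s t : V) → G.Walk s t) (hπ : IsShortestPathScheme G w π)
    (D : ℕ) (N : V → Finset V) (hN : ∀ v, ∀ u ∈ N v, G.Adj v u)
    (hN2 : ∀ v y, G.Adj v y → y ∉ N v → (N v).card = D ∧ ∀ u ∈ N v, w s(v, u) ≤ w s(v, y))
    (L : Finset (Sym2 V)) (hL : ∀ v, ∀ u ∈ N v, s(v, u) ∈ L) (s t : V) :
    D * ((π s t).darts.filter (fun d => d.edge ∉ L)).length ≤
      3 * (Finset.univ.filter (fun u => gdist G w s u + gdist G w u t ≤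
        gdist G w s t + 2 * maxEdge G w (π s t))).card := by
  obtain ⟨hd, hpw⟩ := dart_struct G w hc hw s (π s t) (by rw [gdist_self, hπ, add_zero])
  have hfin := gdist_ne_top G w hc hw
  have key : ∀ z u : V, ∀ e ∈ (π s t).edges,
      gdist G w s z + gdist G w z t ≤ gdist G w s t → G.Adj z u → w s(z, u) ≤ w e →
      gdist G w s u + gdist G w u t ≤ gdist G w s t + 2 * maxEdge G w (π s t) ∧
      (gdist G w s u).toReal ≤ (gdist G w s z).toReal + (w e).toReal ∧
      (gdist G w s z).toReal ≤ (gdist G w s u).toReal + (w e).toReal := by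
    intro z u e he hz hzu hwe
    have hef := (hw e ((π s t).edges_subset_edgeSet he)).2
    have hm := le_maxEdge G w _ e he
    have g1 : gdist G w z u ≤ w e := (gdist_adj G w hzu).trans hwe
    have g2 : gdist G w u z ≤ w e := by rw [gdist_symm]; exact g1
    have a1 : gdist G w s u ≤ gdist G w s z + w e :=
      (gdist_triangle G w s z u).trans (by gcongr)
    have a2 : gdist G w s z ≤ gdist G w s u + w e :=
      (gdist_triangle G w s u z).trans (by gcongr)
    have a3 : gdist G w u t ≤ w e + gdist G w z t :=
      (gdist_triangle G w u z t).trans (by gcongr)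
    refine ⟨?_, toReal_le_add a1 (hfin _ _) hef, toReal_le_add a2 (hfin _ _) hef⟩
    calc _ ≤ (gdist G w s z + w e) + (w e + gdist G w z t) := add_le_add a1 a3
      _ = (gdist G w s z + gdist G w z t) + 2 * w e := by ring
      _ ≤ _ := by gcongr
  obtain ⟨S, hS, hSQ⟩ := blocks N (fun v => (gdist G w s v).toReal) D
    (fun u => gdist G w s u + gdist G w u t ≤ gdist G w s t + 2 * maxEdge G w (π s t))
    (fun d : G.Dart => d.fst) (fun d => d.snd) (fun d => (w d.edge).toReal) _
    ((π s t).darts.filter (fun d => d.edge ∉ L)) le_rfl (by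
      intro d hdm
      simp only [List.mem_filter, decide_eq_true_eq] at hdm
      obtain ⟨hdm, hdL⟩ := hdm
      obtain ⟨e1, e2, e3, e4⟩ := hd d hdm
      have hed : d.edge ∈ (π s t).edges := List.mem_map_of_mem hdm
      have hwd := hw _ d.edge_mem
      have hE : d.edge = s(d.fst, d.snd) := rfl
      have hE' : d.edge = s(d.snd, d.fst) := by rw [hE, Sym2.eq_swap]
      have n1 := hN2 d.fst d.snd d.adj (fun h => hdL (by rw [hE]; exact hL _ _ h))
      have n2 := hN2 d.snd d.fst d.adj.symm (fun h => hdL (by rw [hE']; exact hL _ _ h))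
      refine ⟨ENNReal.toReal_pos hwd.1.ne' hwd.2, ?_, n1.1, n2.1, ?_, ?_⟩
      · simp only [e1]
        exact ENNReal.toReal_add (hfin _ _) hwd.2
      · intro u hu
        exact key d.fst u d.edge hed e3 (hN _ _ hu) (by rw [hE]; exact n1.2 u hu)
      · intro u hu
        exact key d.snd u d.edge hed e4 (hN _ _ hu) (by rw [hE']; exact n2.2 u hu))
    ((hpw.imp (fun h => ENNReal.toReal_mono (hfin _ _) h)).filter _) 0
    (fun _ _ => ENNReal.toReal_nonneg)
  refine hS.trans (Nat.mul_le_mul_left _ (Finset.card_le_card ?_))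
  intro u hu
  simpa using (hSQ u hu).1

lemma cube_step (x y k : ℝ) (hy : 0 ≤ y) (hyx : y ≤ x) (h : k ≤ x ^ 3 - y ^ 3) :
    k ≤ 3 * x ^ 2 * (x - y) := by
  nlinarith [mul_nonneg (sub_nonneg.2 hyx) (sub_nonneg.2 hyx), mul_nonneg hy (sub_nonneg.2 hyx),
    mul_nonneg (mul_nonneg (sub_nonneg.2 hyx) (sub_nonneg.2 hyx)) (hy.trans hyx),
    mul_nonneg (mul_nonneg (sub_nonneg.2 hyx) (sub_nonneg.2 hyx)) hy]

lemma cbrt_pow (p : ℝ) (hp : 0 ≤ p) : (p ^ ((1 : ℝ) / 3)) ^ 3 = p := by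
  rw [← Real.rpow_natCast, ← Real.rpow_mul hp]; norm_num

lemma main_ind {V : Type} [Fintype V] (G : SimpleGraph V) (w : Sym2 V → ℝ≥0∞)
    (hc : G.Connected) (hw : PosWeights G w)
    (π : (s t : V) → G.Walk s t) (hπ : IsShortestPathScheme G w π)
    (D : ℕ) (L : Finset (Sym2 V))
    (hub : ∀ s t, D * ((π s t).darts.filter (fun d => d.edge ∉ L)).length ≤
      3 * (Finset.univ.filter (fun u => gdist G w s u + gdist G w u t ≤
        gdist G w s t + 2 * maxEdge G w (π s t))).card) :
    ∀ (p : ℕ) (P : Finset (V × V)), P.card = p → (p : ℝ) ^ ((1 : ℝ) / 3) ≤ D →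
    ∃ E : Finset (Sym2 V), (E : Set (Sym2 V)) ⊆ G.edgeSet ∧
      (E.card : ℝ) ≤ 9 * Fintype.card V * (p : ℝ) ^ ((1 : ℝ) / 3) ∧
      ∀ q ∈ P, gdist (SimpleGraph.fromEdgeSet ((L ∪ E : Finset (Sym2 V)) : Set (Sym2 V))) w q.1 q.2
        ≤ gdist G w q.1 q.2 + 2 * maxEdge G w (π q.1 q.2) := by
  intro p
  induction p using Nat.strong_induction_on with
  | _ p ih =>
  intro P hP hpD
  by_cases hp0 : p = 0
  · subst hp0
    rw [Finset.card_eq_zero] at hP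
    subst hP
    exact ⟨∅, by simp, by simp, by simp⟩
  have hp1 : 0 < (p : ℝ) := by exact_mod_cast Nat.pos_of_ne_zero hp0
  set x := (p : ℝ) ^ ((1 : ℝ) / 3) with hx
  have hx0 : 0 < x := by positivity
  have hx3 : x ^ 3 = p := cbrt_pow _ hp1.le
  set n := (Fintype.card V : ℝ) with hn
  have hn0 : 0 ≤ n := by positivity
  -- generic step
  have step : ∀ (R : Finset (V × V)) (F : Finset (Sym2 V)), R ⊆ P → R.Nonempty →
      (F : Set (Sym2 V)) ⊆ G.edgeSet → (F.card : ℝ) * x ^ 2 ≤ 3 * n * R.card →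
      (∀ q ∈ R, ∀ F' : Finset (Sym2 V), F ⊆ F' →
        gdist (SimpleGraph.fromEdgeSet ((L ∪ F' : Finset (Sym2 V)) : Set (Sym2 V))) w q.1 q.2
        ≤ gdist G w q.1 q.2 + 2 * maxEdge G w (π q.1 q.2)) →
      ∃ E : Finset (Sym2 V), (E : Set (Sym2 V)) ⊆ G.edgeSet ∧
      (E.card : ℝ) ≤ 9 * n * x ∧
      ∀ q ∈ P, gdist (SimpleGraph.fromEdgeSet ((L ∪ E : Finset (Sym2 V)) : Set (Sym2 V))) w q.1 q.2
        ≤ gdist G w q.1 q.2 + 2 * maxEdge G w (π q.1 q.2) := by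
    intro R F hRP hR hFG hF hgood
    have hcard : (P \ R).card + R.card = p := by
      rw [Finset.card_sdiff_add_card_eq_card hRP, hP]
    have hlt : (P \ R).card < p := by
      have := hR.card_pos
      omega
    set y := ((P \ R).card : ℝ) ^ ((1 : ℝ) / 3) with hy
    have hyx : y ≤ x := by
      apply Real.rpow_le_rpow (by positivity) (by exact_mod_cast hlt.le) (by norm_num)
    have hy0 : 0 ≤ y := by positivity
    have hy3 : y ^ 3 = ((P \ R).card : ℝ) := cbrt_pow _ (by positivity)
    obtain ⟨E, hE1, hE2, hE3⟩ := ih _ hlt (P \ R) rfl (hyx.trans hpD)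
    refine ⟨F ∪ E, ?_, ?_, ?_⟩
    · rw [Finset.coe_union]; exact Set.union_subset hFG hE1
    · have h1 : ((F ∪ E).card : ℝ) ≤ F.card + E.card := by
        exact_mod_cast Finset.card_union_le F E
      have h2 : (R.card : ℝ) ≤ 3 * x ^ 2 * (x - y) := by
        apply cube_step x y _ hy0 hyx
        rw [hx3, hy3, ← hcard]; push_cast; linarith
      have h3 : (F.card : ℝ) ≤ 9 * n * (x - y) := by
        have : (F.card : ℝ) * x ^ 2 ≤ (9 * n * (x - y)) * x ^ 2 := by
          have := mul_le_mul_of_nonneg_left h2 hn0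
          nlinarith
        exact le_of_mul_le_mul_right this (by positivity)
      change (E.card : ℝ) ≤ 9 * n * y at hE2
      linarith
    · intro q hq
      by_cases hqR : q ∈ R
      · exact hgood q hqR _ Finset.subset_union_left
      · refine le_trans (gdist_mono w ?_ _ _) (hE3 q (by simp [hq, hqR]))
        apply SimpleGraph.fromEdgeSet_mono
        intro e
        simp only [Finset.coe_union, Set.mem_union]
        tauto
  by_cases hA : ∃ q ∈ P,
      (((π q.1 q.2).darts.filter (fun d => d.edge ∉ L)).length : ℝ) * x ^ 2 ≤ 3 * n
  · obtain ⟨q, hq, hlen⟩ := hA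
    refine step {q} (((π q.1 q.2).darts.filter (fun d => d.edge ∉ L)).map
      SimpleGraph.Dart.edge).toFinset (by simpa using hq) (by simp) ?_ ?_ ?_
    · intro e he
      simp only [List.coe_toFinset, List.mem_map, Set.mem_ofPred_eq] at he
      obtain ⟨d, -, rfl⟩ := he
      exact d.edge_mem
    · refine le_trans ?_ (hlen.trans (by simp))
      gcongr
      exact (List.toFinset_card_le _).trans (by simp)
    · intro q' hq' F' hF'
      rw [Finset.mem_singleton] at hq'
      subst hq'
      have hall : ∀ e ∈ (π q'.1 q'.2).edges,
          e ∈ (SimpleGraph.fromEdgeSet ((L ∪ F' : Finset (Sym2 V)) : Set (Sym2 V))).edgeSet := by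
        intro e he
        have hG := (π q'.1 q'.2).edges_subset_edgeSet he
        rw [SimpleGraph.edgeSet_fromEdgeSet]
        refine ⟨?_, fun h => G.not_isDiag_of_mem_edgeSet hG h⟩
        rw [Finset.mem_coe, Finset.mem_union]
        by_cases heL : e ∈ L
        · exact Or.inl heL
        · right
          apply hF'
          obtain ⟨d, hd, rfl⟩ := List.mem_map.1 he
          rw [List.mem_toFinset]
          exact List.mem_map_of_mem (List.mem_filter.2 ⟨hd, by simpa using heL⟩)
      refine (gdist_le _ w ((π q'.1 q'.2).transfer _ hall)).trans ?_
      rw [← hπ]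
      refine le_trans (le_of_eq ?_) le_self_add
      simp [walkWeight]
  · push Not at hA
    -- averaging
    let hit : V → V × V → Prop := fun u q => gdist G w q.1 u + gdist G w u q.2 ≤
        gdist G w q.1 q.2 + 2 * maxEdge G w (π q.1 q.2)
    have hbig : ∀ q ∈ P, n ≤ ((Finset.univ.filter (fun u => hit u q)).card : ℝ) * x := by
      intro q hq
      have h1 := hA q hq
      have h2 : (D : ℝ) * (((π q.1 q.2).darts.filter (fun d => d.edge ∉ L)).length : ℝ) ≤
        3 * ((Finset.univ.filter (fun u => hit u q)).card : ℝ) := by exact_mod_cast hub q.1 q.2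
      set m := (((π q.1 q.2).darts.filter (fun d => d.edge ∉ L)).length : ℝ)
      have hm : 0 ≤ m := by positivity
      have h3 : x * m ≤ D * m := by gcongr
      nlinarith
    have hdc : ∑ q ∈ P, (Finset.univ.filter (fun u => hit u q)).card =
        ∑ u : V, (P.filter (fun q => hit u q)).card := by
      simp only [Finset.card_filter]
      exact Finset.sum_comm
    have hex : ∃ u : V, x ^ 2 ≤ ((P.filter (fun q => hit u q)).card : ℝ) := by
      by_contra! hcon
      have hne : (Finset.univ : Finset V).Nonempty := by
        obtain ⟨v⟩ := hc.nonempty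
        exact ⟨v, Finset.mem_univ _⟩
      have h1 : ∑ u : V, ((P.filter (fun q => hit u q)).card : ℝ) < ∑ u : V, x ^ 2 :=
        Finset.sum_lt_sum_of_nonempty hne (fun u _ => hcon u)
      have h2 : ∑ q ∈ P, n ≤ ∑ q ∈ P, ((Finset.univ.filter (fun u => hit u q)).card : ℝ) * x :=
        Finset.sum_le_sum hbig
      rw [← Finset.sum_mul] at h2
      have h3 : ∑ q ∈ P, ((Finset.univ.filter (fun u => hit u q)).card : ℝ) =
        ∑ u : V, ((P.filter (fun q => hit u q)).card : ℝ) := by exact_mod_cast hdc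
      rw [h3] at h2
      simp only [Finset.sum_const, nsmul_eq_mul, hP, Finset.card_univ] at h1 h2
      rw [← hx3] at h2
      have h4 := mul_lt_mul_of_pos_right h1 hx0
      have : (Fintype.card V : ℝ) * x ^ 2 * x = x ^ 3 * n := by rw [hn]; ring
      linarith
    obtain ⟨u, hu⟩ := hex
    obtain ⟨T, hT1, hT2, hT3⟩ := exists_tree G w hc hw π hπ u
    refine step (P.filter (fun q => hit u q)) T (Finset.filter_subset _ _) ?_ hT1 ?_ ?_
    · rw [← Finset.card_pos]
      have : (0 : ℝ) < ((P.filter (fun q => hit u q)).card : ℝ) := lt_of_lt_of_le (by positivity) hu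
      exact_mod_cast this
    · have : (T.card : ℝ) ≤ n := by rw [hn]; exact_mod_cast hT2
      calc (T.card : ℝ) * x ^ 2 ≤ n * ((P.filter (fun q => hit u q)).card : ℝ) := by gcongr
        _ ≤ 3 * n * ((P.filter (fun q => hit u q)).card : ℝ) := by
          gcongr; linarith
    · intro q hq F' hF'
      have hq2 := (Finset.mem_filter.1 hq).2
      refine le_trans (gdist_mono (G := SimpleGraph.fromEdgeSet (T : Set (Sym2 V))) w ?_ _ _)
        (le_trans ?_ hq2)
      · apply SimpleGraph.fromEdgeSet_mono
        intro e he
        simp only [Finset.coe_union, Set.mem_union]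
        exact Or.inr (hF' he)
      · refine (gdist_triangle _ w _ u _).trans (add_le_add (hT3 _) ?_)
        rw [gdist_symm, gdist_symm G]
        exact hT3 _

/-- Every connected weighted graph `G` on `n` vertices and every set
`𝒫 ⊆ V × V` of vertex pairs admits a subgraph `H` of `G` on at most `C·n·|𝒫|^(1/3)` edges
(for a universal constant `C`) with `d_H(s,t) ≤ d_G(s,t) + 2·W(s,t)` for all `(s,t) ∈ 𝒫`. -/
theorem pairwise_two_W_spanner :
    ∃ C : ℝ, 0 < C ∧
      ∀ (V : Type) [Fintype V] (G : SimpleGraph V) (w : Sym2 V → ℝ≥0∞),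
        G.Connected → PosWeights G w →
        ∀ π : (s t : V) → G.Walk s t, IsShortestPathScheme G w π →
          ∀ P : Set (V × V),
            ∃ H : SimpleGraph V, H ≤ G ∧
              (H.edgeSet.ncard : ℝ) ≤
                C * (Fintype.card V : ℝ) * (P.ncard : ℝ) ^ ((1 : ℝ) / 3) ∧
              ∀ s t : V, (s, t) ∈ P →
                gdist H w s t ≤ gdist G w s t + 2 * maxEdge G w (π s t) := by
  refine ⟨11, by norm_num, ?_⟩
  intro V _ G w hc hw π hπ P
  by_cases hP0 : P.ncard = 0
  · have hPe : P = ∅ := (Set.ncard_eq_zero (Set.toFinite P)).1 hP0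
    refine ⟨⊥, bot_le, ?_, ?_⟩
    · simp [hP0]
    · intro s t h
      simp [hPe] at h
  set x := (P.ncard : ℝ) ^ ((1 : ℝ) / 3) with hx
  have hp1 : (1 : ℝ) ≤ P.ncard := by exact_mod_cast Nat.pos_of_ne_zero hP0
  have hx1 : 1 ≤ x := Real.one_le_rpow hp1 (by norm_num)
  have hlight := fun v => exists_light (Finset.univ.filter (fun u => G.Adj v u))
    (fun u => w s(v, u)) ⌈x⌉₊
  choose N hN1 hN2 hN3 using hlight
  let L : Finset (Sym2 V) := Finset.univ.biUnion (fun v => (N v).image (fun u => s(v, u)))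
  have hNadj : ∀ v, ∀ u ∈ N v, G.Adj v u := fun v u hu => by simpa using hN1 v hu
  have hL : ∀ v, ∀ u ∈ N v, s(v, u) ∈ L := by
    intro v u hu
    exact Finset.mem_biUnion.2 ⟨v, Finset.mem_univ _, Finset.mem_image_of_mem _ hu⟩
  have hLG : (L : Set (Sym2 V)) ⊆ G.edgeSet := by
    intro e he
    obtain ⟨v, -, he⟩ := Finset.mem_biUnion.1 (Finset.mem_coe.1 he)
    obtain ⟨u, hu, rfl⟩ := Finset.mem_image.1 he
    exact hNadj v u hu
  have hLc : L.card ≤ Fintype.card V * ⌈x⌉₊ :=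
    Finset.card_biUnion_le_card_mul _ _ _ (fun v _ => Finset.card_image_le.trans (hN2 v))
  have hub := many_hubs G w hc hw π hπ ⌈x⌉₊ N hNadj
    (fun v y hvy hy => hN3 v y (by simpa using hvy) hy) L hL
  obtain ⟨E, hE1, hE2, hE3⟩ := main_ind G w hc hw π hπ ⌈x⌉₊ L hub P.ncard P.toFinset
    (Set.ncard_eq_toFinset_card' P).symm (Nat.le_ceil x)
  have hsub : ((L ∪ E : Finset (Sym2 V)) : Set (Sym2 V)) ⊆ G.edgeSet := by
    rw [Finset.coe_union]; exact Set.union_subset hLG hE1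
  refine ⟨SimpleGraph.fromEdgeSet ((L ∪ E : Finset (Sym2 V)) : Set (Sym2 V)), ?_, ?_, ?_⟩
  · intro a b hab
    exact hsub ((SimpleGraph.fromEdgeSet_adj _).1 hab).1
  · have h1 : (SimpleGraph.fromEdgeSet ((L ∪ E : Finset (Sym2 V)) : Set (Sym2 V))).edgeSet.ncard
        ≤ (L ∪ E).card := by
      rw [← Set.ncard_coe_finset, SimpleGraph.edgeSet_fromEdgeSet]
      exact Set.ncard_le_ncard Set.sdiff_subset (Set.toFinite _)
    have h2 := h1.trans (Finset.card_union_le L E)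
    have h3 : ((SimpleGraph.fromEdgeSet
        ((L ∪ E : Finset (Sym2 V)) : Set (Sym2 V))).edgeSet.ncard : ℝ) ≤
        Fintype.card V * (⌈x⌉₊ : ℝ) + E.card := by
      exact_mod_cast h2.trans (Nat.add_le_add_right hLc _)
    have h4 : (⌈x⌉₊ : ℝ) ≤ 2 * x := by
      have := Nat.ceil_lt_add_one (show 0 ≤ x by linarith)
      linarith
    have h5 : (Fintype.card V : ℝ) * (⌈x⌉₊ : ℝ) ≤ Fintype.card V * (2 * x) := by gcongr
    linarith
  · intro s t hst
    exact hE3 (s, t) (by simpa using hst)
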